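/- arXiv:1802.00659 — 2 statements merged into one kernel-verified Lean document; each statement's English description precedes it below -/
import Mathlib

section
/- Let S be a finite semigroup with N ≥ 2 elements, let X ⊆ S, and suppose y ∈ S can be written as y = x_1^{i_1} ⋯ x_k^{i_k} with x_1, …, x_k ∈ X, positive exponents 1 ≤ i_j ≤ N for all j, and k ≤ log₂ N. Then there exists a product straight-line program over X in S of length less than 5 (log₂ N)² computing y. -/
/-!
Repeated squaring computes `x ^ e` from a generator `x` in at most `3 log₂ e + 1` steps: halving the
exponent costs one squaring and, if it is odd, one more copy of `x` and one more product. Running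
the programs of the `k` factors one after the other and joining them with `k - 1` products gives
length at most `(3 log₂ N + 2) k - 1`, and with `R = log₂ N ≥ k` this is at most
`3 R² + 2 R - 1 < 5 R²`, the difference being `R² + (R - 1)²`.

Powers and products are formed in the monoid `WithOne S`, and the resulting program is pulled back
to `S`: all its entries lie in the image of `S`, since its generators do.
-/

section Mul

variable {M : Type*} [Mul M] {X : Set M} {m n : ℕ}

/-- A product straight-line program over `X`: a sequence `g` of length `n`, each of whose entries is
in `X` or the product of two earlier ones. The empty sequence is allowed, so that programs can be
built up entry by entry. -/
def IsStraightLineProgram (X : Set M) (g : Fin n → M) : Prop :=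
  ∀ a, g a ∈ X ∨ ∃ p q, p < a ∧ q < a ∧ g a = g p * g q

namespace IsStraightLineProgram

theorem append {f : Fin m → M} {g : Fin n → M} (hf : IsStraightLineProgram X f)
    (hg : IsStraightLineProgram X g) : IsStraightLineProgram X (Fin.append f g) := by
  refine Fin.addCases (fun a => ?_) (fun a => ?_)
  · refine (hf a).imp (by simp) ?_
    rintro ⟨p, q, hp, hq, h⟩
    exact ⟨p.castAdd n, q.castAdd n, hp, hq, by simpa using h⟩
  · refine (hg a).imp (by simp) ?_
    rintro ⟨p, q, hp, hq, h⟩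
    exact ⟨p.natAdd m, q.natAdd m, by simpa using hp, by simpa using hq, by simpa using h⟩

theorem snoc_mul {g : Fin n → M} (hg : IsStraightLineProgram X g) (p q : Fin n) :
    IsStraightLineProgram X (Fin.snoc g (g p * g q) : Fin (n + 1) → M) := by
  refine Fin.lastCases (Or.inr ?_) (fun a => ?_)
  · exact ⟨p.castSucc, q.castSucc, p.castSucc_lt_last, q.castSucc_lt_last, by simp⟩
  · refine (hg a).imp (by simp) ?_
    rintro ⟨p', q', hp, hq, h⟩
    exact ⟨p'.castSucc, q'.castSucc, by simpa using hp, by simpa using hq, by simpa using h⟩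

theorem mem_of_subset {g : Fin n → M} (hg : IsStraightLineProgram X g) {U : Subsemigroup M}
    (hXU : X ⊆ U) (a : Fin n) : g a ∈ U := by
  induction a using WellFoundedLT.induction with
  | ind a ih =>
    rcases hg a with hX | ⟨p, q, hp, hq, h⟩
    · exact hXU hX
    · exact h ▸ mul_mem (ih p hp) (ih q hq)

theorem of_comp_injective {T : Type*} [Mul T] {f : T →ₙ* M} (hf : Function.Injective f)
    {X : Set T} {g : Fin n → T} (hg : IsStraightLineProgram (f '' X) (f ∘ g)) :
    IsStraightLineProgram X g := by
  refine fun a => (hg a).imp hf.mem_set_image.mp ?_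
  rintro ⟨p, q, hp, hq, h⟩
  exact ⟨p, q, hp, hq, hf (by simpa only [map_mul, Function.comp_apply] using h)⟩

end IsStraightLineProgram

/-- The element `s` is the last entry of a nonempty product straight-line program over `X` of length
at most `n`. -/
def StraightLineComputable (X : Set M) (n : ℕ) (s : M) : Prop :=
  ∃ (m : ℕ) (g : Fin (m + 1) → M), IsStraightLineProgram X g ∧ m + 1 ≤ n ∧ g (Fin.last m) = s

namespace StraightLineComputable

variable {s t : M}

theorem mono (hs : StraightLineComputable X m s) (hmn : m ≤ n) : StraightLineComputable X n s :=
  let ⟨l, g, hg, hl, hlast⟩ := hs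
  ⟨l, g, hg, hl.trans hmn, hlast⟩

theorem of_mem (hs : s ∈ X) : StraightLineComputable X 1 s :=
  ⟨0, fun _ => s, fun _ => Or.inl hs, le_rfl, rfl⟩

theorem mul_self (hs : StraightLineComputable X n s) :
    StraightLineComputable X (n + 1) (s * s) := by
  obtain ⟨l, g, hg, hl, rfl⟩ := hs
  exact ⟨l + 1, _, hg.snoc_mul (Fin.last l) (Fin.last l), by omega, Fin.snoc_last _ _⟩

theorem mul (hs : StraightLineComputable X m s) (ht : StraightLineComputable X n t) :
    StraightLineComputable X (m + n + 1) (s * t) := by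
  obtain ⟨k, f, hf, hk, rfl⟩ := hs
  obtain ⟨l, g, hg, hl, rfl⟩ := ht
  refine ⟨k + 1 + (l + 1), _,
    (hf.append hg).snoc_mul ((Fin.last k).castAdd (l + 1)) ((Fin.last l).natAdd (k + 1)),
    by omega, ?_⟩
  rw [Fin.snoc_last, Fin.append_left, Fin.append_right]

theorem of_image {T : Type*} [Mul T] {f : T →ₙ* M} (hf : Function.Injective f) {X : Set T} {t : T}
    (ht : StraightLineComputable (f '' X) n (f t)) : StraightLineComputable X n t := by
  obtain ⟨l, g, hg, hl, hlast⟩ := ht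
  have hrange (a : Fin (l + 1)) : ∃ s, f s = g a :=
    MulHom.mem_srange.mp (hg.mem_of_subset (Set.image_subset_range f X) a)
  choose g' hg' using hrange
  obtain rfl : f ∘ g' = g := funext hg'
  exact ⟨l, g', hg.of_comp_injective hf, hl, hf hlast⟩

end StraightLineComputable

end Mul

namespace StraightLineComputable

variable {M : Type*} [Monoid M] {X : Set M}

theorem pow {x : M} (hx : x ∈ X) {e : ℕ} (he : e ≠ 0) :
    StraightLineComputable X (3 * Nat.log 2 e + 1) (x ^ e) := by
  induction e using Nat.strong_induction_on with
  | _ e ih =>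
    obtain rfl | he2 : e = 1 ∨ 2 ≤ e := by omega
    · simpa using of_mem hx
    have hlog : Nat.log 2 e = Nat.log 2 (e / 2) + 1 := Nat.log_of_one_lt_of_le one_lt_two he2
    have hsq := (ih (e / 2) (by omega) (by omega)).mul_self
    rw [← pow_add, ← two_mul] at hsq
    obtain heven | hodd := Nat.even_or_odd e
    · rw [Nat.two_mul_div_two_of_even heven] at hsq
      exact hsq.mono (by omega)
    · have hmul := hsq.mul (of_mem hx)
      rw [← pow_succ, Nat.two_mul_div_two_add_one_of_odd hodd] at hmul
      exact hmul.mono (by omega)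

theorem list_prod {n : ℕ} {l : List M} (hl : l ≠ [])
    (h : ∀ s ∈ l, StraightLineComputable X n s) :
    StraightLineComputable X ((n + 1) * l.length - 1) l.prod := by
  induction l with
  | nil => contradiction
  | cons s l ih =>
    obtain ⟨hs, hl'⟩ := List.forall_mem_cons.mp h
    obtain rfl | hne := eq_or_ne l []
    · simpa using hs
    have hlength : n + 1 ≤ (n + 1) * l.length :=
      Nat.le_mul_of_pos_right _ (List.length_pos_of_ne_nil hne)
    rw [List.prod_cons, List.length_cons, Nat.mul_succ]
    exact (hs.mul (ih hne hl')).mono (by omega)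

end StraightLineComputable

theorem three_mul_log_add_two_mul_sub_one_lt {N k : ℕ} (hk : k ≠ 0)
    (hkN : (k : ℝ) ≤ Real.logb 2 N) :
    (((3 * Nat.log 2 N + 2) * k - 1 : ℕ) : ℝ) < 5 * Real.logb 2 N ^ 2 := by
  set R := Real.logb 2 N
  have hR : 0 ≤ R := k.cast_nonneg.trans hkN
  have hlog : (Nat.log 2 N : ℝ) ≤ R := mod_cast Real.natLog_le_logb N 2
  calc (((3 * Nat.log 2 N + 2) * k - 1 : ℕ) : ℝ)
      = (3 * Nat.log 2 N + 2) * k - 1 := by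
        rw [Nat.cast_pred (by positivity)]
        norm_cast
    _ ≤ (3 * R + 2) * R - 1 := by gcongr
    _ < 5 * R ^ 2 := by nlinarith [sq_nonneg R, sq_nonneg (R - 1)]

theorem logPowerBasis_polylog_straight_line_program_general
    {S : Type*} [Semigroup S] {N : ℕ} (X : Set S) (y : S) (k : ℕ)
    (x : Fin k → S) (i : Fin k → ℕ)
    (hx : ∀ j, x j ∈ X) (hi : ∀ j, 1 ≤ i j ∧ i j ≤ N)
    (hk : (k : ℝ) ≤ Real.logb 2 N)
    (hy : (y : WithOne S) = (List.ofFn fun j => (x j : WithOne S) ^ (i j)).prod) :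
    ∃ (m : ℕ) (g : Fin (m + 1) → S),
      IsStraightLineProgram X g ∧ ((m + 1 : ℕ) : ℝ) < 5 * Real.logb 2 N ^ 2 ∧
      g (Fin.last m) = y := by
  have hk0 : k ≠ 0 := by
    rintro rfl
    rw [List.ofFn_zero, List.prod_nil] at hy
    exact WithOne.coe_ne_one hy
  have hpow (j : Fin k) : StraightLineComputable (WithOne.coeMulHom '' X) (3 * Nat.log 2 N + 1)
      ((x j : WithOne S) ^ i j) :=
    (StraightLineComputable.pow (Set.mem_image_of_mem _ (hx j))
      (Nat.one_le_iff_ne_zero.mp (hi j).1)).mono (by gcongr; exact (hi j).2)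
  have hprod := StraightLineComputable.list_prod (mt List.ofFn_eq_nil_iff.mp hk0)
    (List.forall_mem_ofFn_iff.mpr hpow)
  rw [← hy, List.length_ofFn] at hprod
  obtain ⟨m, g, hg, hm, hlast⟩ := hprod.of_image WithOne.coe_injective
  exact ⟨m, g, hg,
    (Nat.cast_le.mpr hm).trans_lt (three_mul_log_add_two_mul_sub_one_lt hk0 hk), hlast⟩

/-- If `S` is a finite semigroup with `N ≥ 2` elements, `X ⊆ S`, and
`y = x₁^{i₁} ⋯ x_k^{i_k}` with `x₁, …, x_k ∈ X`, `1 ≤ i_j ≤ N` and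
`k ≤ log₂ N`, then there is a product straight-line program over `X` in `S`
(a sequence `g : Fin (m + 1) → S`, of length `m + 1`, in which every element is
in `X` or a product of two earlier elements) of length less than `5 (log₂ N)²`
whose last element is `y`.  The (ordered) product of powers with positive
exponents is expressed in the monoid `WithOne S`, whose coercion from `S` is
injective and multiplicative. -/
theorem logPowerBasis_polylog_straight_line_program
    {S : Type*} [Semigroup S] [Fintype S]
    (hN : 2 ≤ Fintype.card S) (X : Set S) (y : S) (k : ℕ)
    (x : Fin k → S) (i : Fin k → ℕ)
    (hx : ∀ j, x j ∈ X) (hi : ∀ j, 1 ≤ i j ∧ i j ≤ Fintype.card S)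
    (hk : (k : ℝ) ≤ Real.logb 2 (Fintype.card S))
    (hy : (y : WithOne S) = (List.ofFn fun j => (x j : WithOne S) ^ (i j)).prod) :
    ∃ (m : ℕ) (g : Fin (m + 1) → S),
      (∀ a, g a ∈ X ∨ ∃ p q, p < a ∧ q < a ∧ g a = g p * g q) ∧
      ((m + 1 : ℕ) : ℝ) < 5 * (Real.logb 2 (Fintype.card S)) ^ 2 ∧
      g (Fin.last m) = y :=
  logPowerBasis_polylog_straight_line_program_general X y k x i hx hi hk hy
end

section
/- Let V be a finite set with n = |V| ≥ 2 elements, let E ⊆ V × V be a directed graph, and let S = (V × {1, …, n−1} × V) ∪ {0} be the semigroup with zero element 0 and multiplication (v, i, w)·(x, j, y) = (v, i+j, y) if w = x and i + j ≤ n−1, and 0 otherwise. Then for all s, t ∈ V, the element (s, n−1, t) belongs to the subsemigroup of S generated by the set {(v, 1, w) : v = w or (v, w) ∈ E} if and only if t is reachable from s in the graph (V, E), i.e., (s, t) lies in the reflexive–transitive closure of E. -/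
/-- Multiplication on `S = (V × {1, …, n−1} × V) ∪ {0}`, modeled as
`Option (V × Fin (n-1) × V)` with `none` as the zero element `0` and the middle
coordinate `i : Fin (n-1)` representing the integer `i + 1 ∈ {1, …, n−1}`:
`(v, i, w) · (x, j, y) = (v, i+j, y)` if `w = x` and `i + j ≤ n − 1` (as
represented integers), and `0` otherwise; all products involving `0` are `0`. -/
def layerMul {V : Type*} [DecidableEq V] (n : ℕ) :
    Option (V × Fin (n - 1) × V) → Option (V × Fin (n - 1) × V) →
      Option (V × Fin (n - 1) × V)
  | some (v, i, w), some (x, j, y) =>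
      if w = x then
        if h : (i : ℕ) + (j : ℕ) + 2 ≤ n - 1 then
          some (v, ⟨(i : ℕ) + (j : ℕ) + 1, by omega⟩, y)
        else none
      else none
  | _, _ => none

/-- Membership in the subsemigroup generated by `X`, i.e. the smallest subset
containing `X` and closed under the multiplication `mul`. -/
inductive InGeneratedSubsemigroup {α : Type*} (mul : α → α → α) (X : Set α) : α → Prop
  | base {x : α} : x ∈ X → InGeneratedSubsemigroup mul X x
  | mul {a b : α} : InGeneratedSubsemigroup mul X a → InGeneratedSubsemigroup mul X b →
      InGeneratedSubsemigroup mul X (mul a b)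

/-!
A product of generators is nonzero only when consecutive endpoints match and there are at most
`n - 1` factors, so `(s, k, t)` is generated exactly when `t` is reached from `s` by a walk of
exactly `k` steps. Loops make the balls around `s` increase with the number of steps; the ball gains
a vertex at every step until it becomes closed under successors, so after `|V| - 1` steps it is the
set of all vertices reachable from `s`.
-/

open Function Relation

section Stabilization

variable {α : Type*} [Finite α] {f : Set α → Set α}

theorem add_ncard_le_ncard_iterate_or_isFixedPt (hf : ∀ A, A ⊆ f A) (A : Set α) (k : ℕ) :
    k + A.ncard ≤ (f^[k] A).ncard ∨ IsFixedPt f (f^[k] A) := by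
  induction k with
  | zero => simp
  | succ k ih =>
    rw [iterate_succ_apply']
    by_cases hfix : IsFixedPt f (f^[k] A)
    · right
      rwa [hfix.eq]
    · left
      have hgrow : (f^[k] A).ncard < (f (f^[k] A)).ncard :=
        Set.ncard_lt_ncard ((hf _).ssubset_of_ne (Ne.symm hfix))
      have := ih.resolve_right hfix
      omega

theorem isFixedPt_iterate_of_card_le (hf : ∀ A, A ⊆ f A) {A : Set α} {k : ℕ}
    (hk : Nat.card α ≤ k + A.ncard) : IsFixedPt f (f^[k] A) := by
  obtain hcard | hfix := add_ncard_le_ncard_iterate_or_isFixedPt hf A k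
  · have huniv : f^[k] A = Set.univ :=
      (Set.eq_univ_iff_ncard _).2 ((Set.ncard_le_card _).antisymm (hk.trans hcard))
    rw [huniv]
    exact Set.univ_subset_iff.1 (hf _)
  · exact hfix

end Stabilization

section Walks

variable {V : Type*} {R : SetRel V V} {s t : V} {k : ℕ}

theorem mem_iterate_image_add {i j : ℕ} {u : V} (hu : u ∈ R.image^[i] {s})
    (ht : t ∈ R.image^[j] {u}) : t ∈ R.image^[i + j] {s} := by
  rw [add_comm, iterate_add_apply]
  exact SetRel.image_mono.iterate j (Set.singleton_subset_iff.2 hu) ht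

theorem reflTransGen_of_mem_iterate_image (h : t ∈ R.image^[k] {s}) :
    ReflTransGen (fun a b ↦ (a, b) ∈ R) s t := by
  induction k generalizing t with
  | zero => rw [Set.mem_singleton_iff.1 h]
  | succ k ih =>
    rw [iterate_succ_apply'] at h
    obtain ⟨u, hu, hut⟩ := h
    exact (ih hu).tail hut

theorem mem_iterate_image_iff_reflTransGen [Finite V] [R.IsRefl] (hk : Nat.card V ≤ k + 1) :
    t ∈ R.image^[k] {s} ↔ ReflTransGen (fun a b ↦ (a, b) ∈ R) s t := by
  refine ⟨reflTransGen_of_mem_iterate_image, fun h ↦ ?_⟩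
  have hfix : R.image (R.image^[k] {s}) = R.image^[k] {s} :=
    isFixedPt_iterate_of_card_le R.self_subset_image (by rwa [Set.ncard_singleton])
  induction h with
  | refl => exact id_le_iterate_of_id_le R.self_subset_image k {s} rfl
  | tail _ hbc ih => exact hfix ▸ ⟨_, ih, hbc⟩

theorem reflTransGen_id_union (E : SetRel V V) :
    ReflTransGen (fun a b ↦ (a, b) ∈ SetRel.id ∪ E) = ReflTransGen (fun a b ↦ (a, b) ∈ E) := by
  rw [← reflTransGen_reflGen (r := fun a b ↦ (a, b) ∈ E)]
  congr! with a b
  simp [reflGen_iff, eq_comm]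

end Walks

section LayerSemigroup

variable {V : Type*} {n : ℕ}

/-- The elements `(v, 1, w)` with `(v, w) ∈ R`; the layer `1` is encoded by `0 : Fin (n - 1)`. -/
def firstLayer (hn : 2 ≤ n) (R : SetRel V V) : Set (Option (V × Fin (n - 1) × V)) :=
  {p | ∃ v w, p = some (v, ⟨0, by omega⟩, w) ∧ (v, w) ∈ R}

variable [DecidableEq V]

theorem layerMul_eq_some_iff {a b : Option (V × Fin (n - 1) × V)} {s t : V} {k : Fin (n - 1)} :
    layerMul n a b = some (s, k, t) ↔
      ∃ i j u, a = some (s, i, u) ∧ b = some (u, j, t) ∧ (i : ℕ) + j + 1 = k := by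
  constructor
  · intro h
    obtain _ | ⟨v, i, w⟩ := a
    · cases h
    obtain _ | ⟨x, j, y⟩ := b
    · cases h
    simp only [layerMul] at h
    split_ifs at h with hwx
    cases h
    exact ⟨i, j, w, rfl, by rw [hwx], rfl⟩
  · rintro ⟨i, j, u, rfl, rfl, hk⟩
    have hij : (i : ℕ) + j + 2 ≤ n - 1 := by omega
    simp [layerMul, hij, hk]

theorem mem_iterate_image_of_inGeneratedSubsemigroup (hn : 2 ≤ n) {R : SetRel V V} {s t : V}
    {k : Fin (n - 1)}
    (h : InGeneratedSubsemigroup (layerMul n) (firstLayer hn R) (some (s, k, t))) :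
    t ∈ R.image^[(k : ℕ) + 1] {s} := by
  generalize hp : some (s, k, t) = p at h
  induction h generalizing s k t with
  | base hx =>
    obtain ⟨v, w, rfl, hvw⟩ := hx
    cases hp
    exact ⟨s, rfl, hvw⟩
  | mul _ _ iha ihb =>
    obtain ⟨i, j, u, rfl, rfl, hk⟩ := layerMul_eq_some_iff.1 hp.symm
    convert mem_iterate_image_add (iha rfl) (ihb rfl) using 2
    omega

theorem inGeneratedSubsemigroup_of_mem_iterate_image (hn : 2 ≤ n) {R : SetRel V V} {s t : V}
    {k : ℕ} (hk : k < n - 1) (h : t ∈ R.image^[k + 1] {s}) :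
    InGeneratedSubsemigroup (layerMul n) (firstLayer hn R) (some (s, ⟨k, hk⟩, t)) := by
  induction k generalizing t with
  | zero =>
    obtain ⟨_, rfl, hst⟩ := h
    exact .base ⟨_, t, rfl, hst⟩
  | succ k ih =>
    rw [iterate_succ_apply'] at h
    obtain ⟨u, hu, hut⟩ := h
    rw [← layerMul_eq_some_iff.2 ⟨⟨k, by omega⟩, ⟨0, by omega⟩, u, rfl, rfl, rfl⟩]
    exact .mul (ih (by omega) hu) (.base ⟨u, t, rfl, hut⟩)

theorem inGeneratedSubsemigroup_iff_mem_iterate_image (hn : 2 ≤ n) {R : SetRel V V} {s t : V}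
    {k : Fin (n - 1)} :
    InGeneratedSubsemigroup (layerMul n) (firstLayer hn R) (some (s, k, t)) ↔
      t ∈ R.image^[(k : ℕ) + 1] {s} :=
  ⟨mem_iterate_image_of_inGeneratedSubsemigroup hn,
    inGeneratedSubsemigroup_of_mem_iterate_image hn k.isLt⟩

theorem layer_semigroup_membership_iff_reachable_general [Finite V] (hn : 2 ≤ n)
    (E : SetRel V V) {k : Fin (n - 1)} (hk : Nat.card V ≤ k + 2) (s t : V) :
    InGeneratedSubsemigroup (layerMul n) (firstLayer hn (SetRel.id ∪ E)) (some (s, k, t)) ↔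
      ReflTransGen (fun a b ↦ (a, b) ∈ E) s t := by
  have : (SetRel.id ∪ E).IsRefl := SetRel.id_subset_iff.1 Set.subset_union_left
  rw [inGeneratedSubsemigroup_iff_mem_iterate_image, mem_iterate_image_iff_reflTransGen hk,
    reflTransGen_id_union]

end LayerSemigroup

/-- For a finite set `V` with `n = |V| ≥ 2` elements and a directed graph
`E ⊆ V × V`, in the semigroup `S = (V × {1, …, n−1} × V) ∪ {0}` the element
`(s, n−1, t)` (middle coordinate `⟨n-2, _⟩ : Fin (n-1)` representing `n−1`)
lies in the subsemigroup generated by `{(v, 1, w) : v = w or (v, w) ∈ E}`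
(middle coordinate `⟨0, _⟩` representing `1`) if and only if `t` is reachable
from `s` in `(V, E)`. -/
theorem layer_semigroup_membership_iff_reachable
    {V : Type*} [Fintype V] [DecidableEq V] (n : ℕ)
    (hn : Fintype.card V = n) (h2 : 2 ≤ n) (E : Set (V × V)) (s t : V) :
    InGeneratedSubsemigroup (layerMul n)
        {p : Option (V × Fin (n - 1) × V) |
          ∃ v w : V, p = some (v, ⟨0, by omega⟩, w) ∧ (v = w ∨ (v, w) ∈ E)}
        (some (s, ⟨n - 2, by omega⟩, t)) ↔
      Relation.ReflTransGen (fun a b : V => (a, b) ∈ E) s t :=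
  layer_semigroup_membership_iff_reachable_general h2 E
    (by rw [Nat.card_eq_fintype_card, hn, Nat.sub_add_cancel h2]) s t
end
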